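/- For all Borel probability measures P and Q on ℝ^n and every real p ≥ 1, there exists a coupling γ of P and Q attaining the infimum defining the p-Wasserstein distance, i.e. (∫ ‖x − y‖₂^p dγ(x,y))^{1/p} = W_p(P, Q) (with both sides valued in [0, ∞]). -/

import Mathlib

open MeasureTheory
open scoped ENNReal

/-- The `p`-transport cost of a coupling `γ` on `ℝⁿ × ℝⁿ`:
`(∫ ‖x − y‖₂ᵖ dγ(x,y))^{1/p}`, valued in `[0, ∞]`. -/
noncomputable def transportCost {n : ℕ} (p : ℝ)
    (γ : Measure (EuclideanSpace ℝ (Fin n) × EuclideanSpace ℝ (Fin n))) : ℝ≥0∞ :=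
  (∫⁻ z, ENNReal.ofReal ‖z.1 - z.2‖ ^ p ∂γ) ^ (1 / p)

/-- The `p`-Wasserstein distance: infimum of the transport cost over all couplings
whose first marginal is `P` and second marginal is `Q`. -/
noncomputable def wassersteinDist {n : ℕ} (p : ℝ)
    (P Q : Measure (EuclideanSpace ℝ (Fin n))) : ℝ≥0∞ :=
  ⨅ (γ : Measure (EuclideanSpace ℝ (Fin n) × EuclideanSpace ℝ (Fin n)))
    (_ : γ.fst = P) (_ : γ.snd = Q), transportCost p γ

/-- Integration of a continuous nonnegative function is lower semicontinuous for weak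
convergence of probability measures. -/
theorem lowerSemicontinuous_lintegral_probabilityMeasure {Ω : Type*} [MeasurableSpace Ω]
    [TopologicalSpace Ω] [OpensMeasurableSpace Ω] {f : Ω → NNReal} (hf : Continuous f) :
    LowerSemicontinuous fun μ : ProbabilityMeasure Ω => ∫⁻ x, (f x : ℝ≥0∞) ∂(μ : Measure Ω) := by
  let F (k : ℕ) : BoundedContinuousFunction Ω NNReal :=
    BoundedContinuousFunction.mkOfBound ⟨fun x => min (f x) k, by fun_prop⟩ k fun x y => by
      have hx : min (f x : ℝ) k ≤ k := min_le_right _ _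
      have hy : min (f y : ℝ) k ≤ k := min_le_right _ _
      have hx' : 0 ≤ min (f x : ℝ) k := by positivity
      have hy' : 0 ≤ min (f y : ℝ) k := by positivity
      simp only [ContinuousMap.coe_mk, NNReal.dist_eq, NNReal.coe_min, NNReal.coe_natCast]
      rw [abs_le]
      constructor <;> linarith
  have hF (k : ℕ) (x : Ω) : F k x = min (f x) k := rfl
  have hsup (μ : ProbabilityMeasure Ω) :
      ∫⁻ x, (f x : ℝ≥0∞) ∂(μ : Measure Ω) = ⨆ k, ∫⁻ x, (F k x : ℝ≥0∞) ∂(μ : Measure Ω) := by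
    rw [← lintegral_iSup]
    · congr with x
      simp only [hF, ENNReal.coe_min, ENNReal.coe_natCast]
      rw [← inf_iSup_eq, ENNReal.iSup_natCast, inf_top_eq]
    · exact fun k => (ENNReal.continuous_coe.comp (F k).continuous).measurable
    · intro k l hkl x
      simp only [hF]
      gcongr
  simp_rw [hsup]
  exact lowerSemicontinuous_iSup fun k =>
    (ProbabilityMeasure.continuous_iff_forall_continuous_lintegral.1
      continuous_id (F k)).lowerSemicontinuous

/-- The set of couplings of two probability measures on Polish spaces is compact for weak
convergence. -/
theorem isCompact_couplings {X Y : Type*}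
    [MeasurableSpace X] [TopologicalSpace X] [PolishSpace X] [BorelSpace X]
    [MeasurableSpace Y] [TopologicalSpace Y] [PolishSpace Y] [BorelSpace Y]
    (P : Measure X) (Q : Measure Y) [IsProbabilityMeasure P] [IsProbabilityMeasure Q] :
    IsCompact {μ : ProbabilityMeasure (X × Y) |
      (μ : Measure (X × Y)).fst = P ∧ (μ : Measure (X × Y)).snd = Q} := by
  let _ := TopologicalSpace.upgradeIsCompletelyMetrizable X
  let _ := TopologicalSpace.upgradeIsCompletelyMetrizable Y
  set S := {μ : ProbabilityMeasure (X × Y) |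
      (μ : Measure (X × Y)).fst = P ∧ (μ : Measure (X × Y)).snd = Q}
  have hclosed : IsClosed S := by
    have h : S = {μ | μ.map measurable_fst.aemeasurable = ⟨P, inferInstance⟩} ∩
        {μ | μ.map measurable_snd.aemeasurable = ⟨Q, inferInstance⟩} := by
      ext μ
      exact ⟨fun h => ⟨Subtype.ext h.1, Subtype.ext h.2⟩,
        fun h => ⟨congrArg Subtype.val h.1, congrArg Subtype.val h.2⟩⟩
    rw [h]
    exact (isClosed_eq (ProbabilityMeasure.continuous_map continuous_fst) continuous_const).inter
      (isClosed_eq (ProbabilityMeasure.continuous_map continuous_snd) continuous_const)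
  rw [← hclosed.closure_eq]
  refine isCompact_closure_of_isTightMeasureSet (.prodMk ?_ ?_)
  · refine (isTightMeasureSet_singleton (μ := P)).subset ?_
    rintro _ ⟨_, ⟨μ, hμ, rfl⟩, rfl⟩
    exact hμ.1
  · refine (isTightMeasureSet_singleton (μ := Q)).subset ?_
    rintro _ ⟨_, ⟨μ, hμ, rfl⟩, rfl⟩
    exact hμ.2

/-- For Borel probability measures `P`, `Q` on `ℝⁿ` and `p ≥ 1`, there exists an optimal
coupling attaining the infimum defining the `p`-Wasserstein distance. -/
theorem exists_optimal_coupling {n : ℕ}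
    (P Q : Measure (EuclideanSpace ℝ (Fin n)))
    [IsProbabilityMeasure P] [IsProbabilityMeasure Q] (p : ℝ) (hp : 1 ≤ p) :
    ∃ γ : Measure (EuclideanSpace ℝ (Fin n) × EuclideanSpace ℝ (Fin n)),
      γ.fst = P ∧ γ.snd = Q ∧ transportCost p γ = wassersteinDist p P Q := by
  have hp0 : 0 ≤ p := zero_le_one.trans hp
  let c (z : EuclideanSpace ℝ (Fin n) × EuclideanSpace ℝ (Fin n)) : NNReal := ‖z.1 - z.2‖₊ ^ p
  have hc : Continuous c := by
    have := NNReal.continuous_rpow_const hp0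
    fun_prop
  have hcost (z) : ENNReal.ofReal ‖z.1 - z.2‖ ^ p = (c z : ℝ≥0∞) := by
    rw [ofReal_norm, ENNReal.coe_rpow_of_nonneg _ hp0]
    rfl
  have hne : {μ : ProbabilityMeasure (EuclideanSpace ℝ (Fin n) × EuclideanSpace ℝ (Fin n)) |
      μ.toMeasure.fst = P ∧ μ.toMeasure.snd = Q}.Nonempty :=
    ⟨⟨P.prod Q, inferInstance⟩, Measure.fst_prod, Measure.snd_prod⟩
  obtain ⟨γ, ⟨hP, hQ⟩, hmin⟩ := LowerSemicontinuousOn.exists_isMinOn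
    hne (isCompact_couplings P Q)
    ((lowerSemicontinuous_lintegral_probabilityMeasure hc).lowerSemicontinuousOn _)
  refine ⟨γ, hP, hQ, le_antisymm ?_ (iInf₂_le_of_le _ hP (iInf_le _ hQ))⟩
  refine le_iInf fun ν => le_iInf₂ fun hνP hνQ => ?_
  have : IsProbabilityMeasure ν := ⟨by rw [← Measure.fst_univ, hνP, measure_univ]⟩
  have hle := hmin (show (⟨ν, this⟩ : ProbabilityMeasure _) ∈ _ from ⟨hνP, hνQ⟩)
  simp only [transportCost, hcost]
  exact ENNReal.rpow_le_rpow hle (by positivity)
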